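/- arXiv:1709.06522 — 2 statements merged into one kernel-verified Lean document; each statement's English description precedes it below -/
import Mathlib

section
/- Let K ∈ 𝒦̄_s^d, a > 0 and ε ∈ (0,1]. If Σ_r(K) ≥ a and ϑ_r(K) ≥ ε, then for any e ∈ K with r_e(K) = Σ_r(K) one has U₁(K) ≥ [1 + c∘(a,d)·ε^{(d+1)/2}]·U₁(B(e,a)), where c∘(a,d) can be taken ≥ (1/8)·(3π^{−4})^{d−1}·a^{d−2}·(π/2 − a)^{d−1}. -/
open Real MeasureTheory Filter
open scoped RealInnerProductSpace ENNReal NNReal Topology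

noncomputable section

/-- The ambient Euclidean space `ℝ^{d+1}`. -/
abbrev Esp (d : ℕ) : Type := EuclideanSpace ℝ (Fin (d + 1))

/-- The unit sphere `S^d ⊂ ℝ^{d+1}`. -/
def uSphere (d : ℕ) : Set (Esp d) := Metric.sphere 0 1

/-- The spherical Lebesgue measure `σ_d` (d-dimensional Hausdorff measure restricted
to the unit sphere). -/
def sigmaMeas (d : ℕ) : Measure (Esp d) := (μH[(d : ℝ)]).restrict (uSphere d)

/-- `ω_{d+1} = σ_d(S^d)`, the total surface area of the unit sphere in `ℝ^{d+1}`. -/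
def omegaTot (d : ℕ) : ℝ := (sigmaMeas d (uSphere d)).toReal

/-- `ω_d`, the `(d-1)`-dimensional measure of the unit sphere `S^{d-1} ⊂ ℝ^d`. -/
def omegaSm (d : ℕ) : ℝ :=
  (μH[((d : ℝ) - 1)] (Metric.sphere (0 : EuclideanSpace ℝ (Fin d)) 1)).toReal

/-- `κ_d`, the volume of the unit ball in `ℝ^d`. -/
def kappaVol (d : ℕ) : ℝ :=
  (volume (Metric.ball (0 : EuclideanSpace ℝ (Fin d)) 1)).toReal

/-- The geodesic (angular) distance `d_s(x,y) = arccos ⟨x,y⟩` on the unit sphere. -/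
def geo {d : ℕ} (x y : Esp d) : ℝ := Real.arccos ⟪x, y⟫

/-- The spherical ball (cap) `B(e,α)` of radius `α` centred at `e`. -/
def cap {d : ℕ} (e : Esp d) (α : ℝ) : Set (Esp d) := {x ∈ uSphere d | geo x e ≤ α}

/-- `K ∈ 𝒦̄_s^d`: a spherically convex body, i.e. the intersection of the unit sphere
with a closed convex cone `C ≠ {0}` which is not a linear subspace. -/
def IsSphConvBody (d : ℕ) (K : Set (Esp d)) : Prop :=
  ∃ C : Set (Esp d), IsClosed C ∧ Convex ℝ C ∧
    (∀ x ∈ C, ∀ t : ℝ, 0 ≤ t → t • x ∈ C) ∧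
    C ≠ {0} ∧ (∀ L : Submodule ℝ (Esp d), C ≠ (L : Set (Esp d))) ∧
    K = C ∩ uSphere d

/-- `K ∈ 𝒦_s^d`: a proper spherically convex body, i.e. the intersection of the unit
sphere with a line-free closed convex cone `C ≠ {0}`. -/
def IsProperSphConvBody (d : ℕ) (K : Set (Esp d)) : Prop :=
  ∃ C : Set (Esp d), IsClosed C ∧ Convex ℝ C ∧
    (∀ x ∈ C, ∀ t : ℝ, 0 ≤ t → t • x ∈ C) ∧
    C ≠ {0} ∧ (∀ x ∈ C, x ≠ 0 → -x ∉ C) ∧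
    K = C ∩ uSphere d

/-- The spherical mean width functional
`U₁(K) = (1/(2 ω_{d+1})) σ_d({x ∈ S^d : x^⊥ ∩ K ≠ ∅})`. -/
def U1 (d : ℕ) (K : Set (Esp d)) : ℝ :=
  (1 / (2 * omegaTot d)) * (sigmaMeas d {x | ∃ y ∈ K, ⟪x, y⟫ = 0}).toReal

/-- `D(x) = ∫₀^x sin^{d-1} t dt`. -/
def Dfun (d : ℕ) (x : ℝ) : ℝ := ∫ t in (0:ℝ)..x, Real.sin t ^ (d - 1)

/-- `S_e = S^d ∩ e^⊥`, the great subsphere orthogonal to `e`. -/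
def equator {d : ℕ} (e : Esp d) : Set (Esp d) := uSphere d ∩ {x | ⟪x, e⟫ = 0}

/-- The rotation invariant probability measure `σ⁰_{d-1}` on the great subsphere `S_e`. -/
def sigma0 (d : ℕ) (e : Esp d) : Measure (Esp d) :=
  (μH[((d : ℝ) - 1)] (equator e))⁻¹ • (μH[((d : ℝ) - 1)]).restrict (equator e)

/-- The spherical radial function `α_{K,e}(u)`: the geodesic distance from `e` to the
boundary of `K` along the great circle through `e` in direction `u ∈ S_e`. -/
def sphRadial {d : ℕ} (K : Set (Esp d)) (e u : Esp d) : ℝ :=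
  sSup {t : ℝ | 0 ≤ t ∧ t ≤ π / 2 ∧ (Real.cos t) • e + (Real.sin t) • u ∈ K}

/-- The set `-int(K*)`: points `e` of the sphere such that `K` is contained in the
open hemisphere centred at `e`. -/
def negIntPolar (d : ℕ) (K : Set (Esp d)) : Set (Esp d) :=
  {e ∈ uSphere d | ∀ x ∈ K, 0 < ⟪e, x⟫}

/-- Points `e` of the sphere such that `K ⊆ {x : ⟨x,e⟩ ≥ 0}` (closed hemisphere). -/
def hemiCenters (d : ℕ) (K : Set (Esp d)) : Set (Esp d) :=
  {e ∈ uSphere d | ∀ x ∈ K, 0 ≤ ⟪x, e⟫}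

/-- The `σ⁰_{d-1}`-average of `D ∘ α_{K,e}` over `S_e`. -/
def avgD (d : ℕ) (K : Set (Esp d)) (e : Esp d) : ℝ :=
  ∫ u, Dfun d (sphRadial K e u) ∂(sigma0 d e)

/-- The `L²(S_e, σ⁰_{d-1})`-deviation of `D ∘ α_{K,e}` from its average. -/
def L2dev (d : ℕ) (K : Set (Esp d)) (e : Esp d) : ℝ :=
  Real.sqrt (∫ u, (Dfun d (sphRadial K e u) - avgD d K e) ^ 2 ∂(sigma0 d e))

/-- `Δ₂(K)`: infimum of the `L²` deviations over `e ∈ -int(K*)`. -/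
def Delta2 (d : ℕ) (K : Set (Esp d)) : ℝ :=
  sInf (L2dev d K '' negIntPolar d K)

/-- `Δ₂*(K)`: infimum of the `L²` deviations over all `e` with
`K ⊆ {x : ⟨x,e⟩ ≥ 0}`. -/
def Delta2Star (d : ℕ) (K : Set (Esp d)) : ℝ :=
  sInf (L2dev d K '' hemiCenters d K)

/-- The centred spherical inradius `r_e(K) = max{r ≥ 0 : B(e,r) ⊆ K}`. -/
def rcent (d : ℕ) (K : Set (Esp d)) (e : Esp d) : ℝ :=
  sSup {r : ℝ | 0 ≤ r ∧ cap e r ⊆ K}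

/-- The centred spherical circumradius `R_e(K) = min{r ≥ 0 : K ⊆ B(e,r)}`. -/
def Rcent (d : ℕ) (K : Set (Esp d)) (e : Esp d) : ℝ :=
  sInf {r : ℝ | 0 ≤ r ∧ K ⊆ cap e r}

/-- The spherical inradius `Σ_r(K) = max{r_e(K) : e ∈ K}`. -/
def SigmaR (d : ℕ) (K : Set (Esp d)) : ℝ :=
  sSup (rcent d K '' K)

/-- The deviation functional `ϑ_r(K) = min{R_e(K) - r_e(K) : e ∈ K, r_e(K) = Σ_r(K)}`. -/
def thetaR (d : ℕ) (K : Set (Esp d)) : ℝ :=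
  sInf ((fun e => Rcent d K e - rcent d K e) '' {e ∈ K | rcent d K e = SigmaR d K})

/-- `Ũ_e(K) = σ_d({x ∈ S^d : (x-e)^⊥ ∩ K ≠ ∅})`. -/
def Utilde (d : ℕ) (e : Esp d) (K : Set (Esp d)) : ℝ :=
  (sigmaMeas d {x | ∃ y ∈ K, ⟪x - e, y⟫ = 0}).toReal

/-- The spherical Hausdorff distance `δ_s`, based on the geodesic metric. -/
def sphHausdorff (d : ℕ) (K L : Set (Esp d)) : ℝ :=
  max (⨆ x ∈ K, ⨅ y ∈ L, geo x y) (⨆ y ∈ L, ⨅ x ∈ K, geo x y)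

/-- Continuity of a functional on `𝒦̄_s^d` with respect to the spherical Hausdorff
metric `δ_s`. -/
def SphContinuous (d : ℕ) (F : Set (Esp d) → ℝ) : Prop :=
  ∀ K, IsSphConvBody d K → ∀ ε > (0:ℝ), ∃ δ > (0:ℝ), ∀ L, IsSphConvBody d L →
    sphHausdorff d K L < δ → |F K - F L| < ε

/-- A hitting functional: continuous, nonnegative, vanishing exactly on one-pointed
sets. -/
def IsHittingFunctional (d : ℕ) (Φ : Set (Esp d) → ℝ) : Prop :=
  SphContinuous d Φ ∧ (∀ K, IsSphConvBody d K → 0 ≤ Φ K) ∧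
    (∀ K, IsSphConvBody d K → (Φ K = 0 ↔ ∃ p, K = {p}))

/-- A size functional: continuous, nonnegative, not identically zero, vanishing on
one-pointed sets. -/
def IsSizeFunctional (d : ℕ) (S : Set (Esp d) → ℝ) : Prop :=
  SphContinuous d S ∧ (∀ K, IsSphConvBody d K → 0 ≤ S K) ∧
    (∃ K, IsSphConvBody d K ∧ S K ≠ 0) ∧
    (∀ p ∈ uSphere d, S ({p} : Set (Esp d)) = 0)

/-- The isoperimetric constant `τ(Φ,Σ,a) = inf{Φ(K) : K ∈ 𝒦̄_s^d, Σ(K) ≥ a}`. -/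
def tauConst (d : ℕ) (Φ S : Set (Esp d) → ℝ) (a : ℝ) : ℝ :=
  sInf (Φ '' {K | IsSphConvBody d K ∧ a ≤ S K})

/-- The spherical convex hull of a set `V ⊆ S^d`: the intersection of the sphere with
the closed convex cone generated by `V`. -/
def sphConvHull (d : ℕ) (V : Set (Esp d)) : Set (Esp d) :=
  {x ∈ uSphere d | ∃ y ∈ convexHull ℝ V, ∃ t : ℝ, 0 < t ∧ x = t • y}

/-- A spherical polytope: the intersection of the sphere with a finitely generated
(polyhedral) cone, which is also a spherically convex body. -/
def IsSphPolytope (d : ℕ) (P : Set (Esp d)) : Prop :=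
  IsSphConvBody d P ∧ ∃ V : Finset (Esp d),
    (V : Set (Esp d)) ⊆ uSphere d ∧ P = sphConvHull d (V : Set (Esp d))

/-- The vertices (extreme points) of a spherical polytope. -/
def sphExtremePoints (d : ℕ) (P : Set (Esp d)) : Set (Esp d) :=
  {x ∈ P | x ∉ sphConvHull d (P \ {x})}

/-- The boundary of `K` relative to the sphere. -/
def sphFrontier (d : ℕ) (K : Set (Esp d)) : Set (Esp d) :=
  {x ∈ K | ∀ ε > (0:ℝ), ∃ y ∈ uSphere d, y ∉ K ∧ dist y x < ε}

/-- The functions `h_m(t) = (-1)^{m+1} e^{-t} + 2 ∑_{i=0}^{⌊m/2⌋} t^{m-2i}/(m-2i)!`. -/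
def hFun (m : ℕ) (t : ℝ) : ℝ :=
  (-1 : ℝ) ^ (m + 1) * Real.exp (-t) +
    2 * ∑ i ∈ Finset.range (m / 2 + 1), t ^ (m - 2 * i) / (Nat.factorial (m - 2 * i) : ℝ)

/-- A rotation invariant measure on the sphere gives equal mass to balls of equal radius. -/
lemma measure_ball_eq_of_invariant {d : ℕ} {μ : Measure (Esp d)}
    (hμ : ∀ T : Esp d ≃ₗᵢ[ℝ] Esp d, MeasurePreserving T μ μ)
    {x y : Esp d} (hx : x ∈ uSphere d) (hy : y ∈ uSphere d) (r : ℝ) :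
    μ (Metric.ball x r) = μ (Metric.ball y r) := by
  have hxy : ‖x‖ = ‖y‖ := by simp [uSphere] at hx hy; rw [hx, hy]
  let T : Esp d ≃ₗᵢ[ℝ] Esp d := (ℝ ∙ (x - y))ᗮ.reflection
  have hT : T x = y := Submodule.reflection_sub hxy
  have h := (hμ T).measure_preimage (Metric.isOpen_ball (x := y) (ε := r)).measurableSet.nullMeasurableSet
  rw [LinearIsometryEquiv.preimage_ball, ← hT, LinearIsometryEquiv.symm_apply_apply] at h
  rw [h, hT]

lemma lintegral_measure_inter_ball {d : ℕ} (μ ν : Measure (Esp d)) [IsFiniteMeasure μ]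
    [IsFiniteMeasure ν] {U : Set (Esp d)} (hU : MeasurableSet U) (r : ℝ) :
    ∫⁻ x, ν (U ∩ Metric.ball x r) ∂μ = ∫⁻ y in U, μ (Metric.ball y r) ∂ν := by
  let P : Set (Esp d × Esp d) := {p | p.2 ∈ U} ∩ {p | dist p.1 p.2 < r}
  have hP : MeasurableSet P :=
    (measurable_snd hU).inter (isOpen_lt (by fun_prop) continuous_const).measurableSet
  have h1 := Measure.prod_apply (μ := μ) (ν := ν) hP
  rw [Measure.prod_apply_symm hP] at h1
  rw [← lintegral_indicator hU]
  have e1 : ∀ x, Prod.mk x ⁻¹' P = U ∩ Metric.ball x r := by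
    intro x; ext y; simp [P, dist_comm x y]
  have e2 : ∀ y, μ ((fun x => (x, y)) ⁻¹' P) = U.indicator (fun y => μ (Metric.ball y r)) y := by
    intro y
    by_cases hy : y ∈ U
    · rw [Set.indicator_of_mem hy]; congr 1; ext x; simp [P, hy]
    · rw [Set.indicator_of_notMem hy]
      have : (fun x => (x, y)) ⁻¹' P = ∅ := by ext x; simp [P, hy]
      rw [this, measure_empty]
  simp only [e1, e2] at h1
  exact h1.symm

lemma measure_ball_pos_of_invariant {d : ℕ} {ν : Measure (Esp d)}
    (hν : ∀ T : Esp d ≃ₗᵢ[ℝ] Esp d, MeasurePreserving T ν ν)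
    (hνS : ν (uSphere d)ᶜ = 0) (hν0 : ν ≠ 0) {x : Esp d} (hx : x ∈ uSphere d) {r : ℝ}
    (hr : 0 < r) : 0 < ν (Metric.ball x r) := by
  rw [pos_iff_ne_zero]
  intro h0
  apply hν0
  have hK : IsCompact (uSphere d) := isCompact_sphere _ _
  obtain ⟨t, htS, htf, hcov⟩ := hK.finite_cover_balls hr
  have hS : ν (uSphere d) = 0 := by
    refine measure_mono_null hcov ((measure_biUnion_null_iff htf.countable).2 fun y hy => ?_)
    rw [measure_ball_eq_of_invariant hν (htS hy) hx, h0]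
  rw [← Measure.measure_univ_eq_zero, ← Set.union_compl_self (uSphere d)]
  exact measure_union_null hS hνS

/-- The Christensen comparison argument for two rotation invariant measures on the sphere. -/
lemma measure_isOpen_le_of_invariant {d : ℕ} {μ ν : Measure (Esp d)} [IsFiniteMeasure μ]
    [IsFiniteMeasure ν]
    (hμ : ∀ T : Esp d ≃ₗᵢ[ℝ] Esp d, MeasurePreserving T μ μ)
    (hν : ∀ T : Esp d ≃ₗᵢ[ℝ] Esp d, MeasurePreserving T ν ν)
    (hμS : μ (uSphere d)ᶜ = 0) (hνS : ν (uSphere d)ᶜ = 0) (hν0 : ν ≠ 0)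
    {U : Set (Esp d)} (hU : IsOpen U) :
    μ U ≤ μ Set.univ / ν Set.univ * ν U := by
  obtain ⟨e, he⟩ : (uSphere d).Nonempty := by
    simp [uSphere]
  have aeμ : ∀ᵐ x ∂μ, x ∈ uSphere d := by rw [ae_iff]; exact hμS
  have aeν : ∀ᵐ x ∂ν, x ∈ uSphere d := by rw [ae_iff]; exact hνS
  have hνu : ν Set.univ ≠ 0 := by simpa using hν0
  have hνt : ν Set.univ ≠ ∞ := measure_ne_top _ _
  have hfubini : ∀ (V : Set (Esp d)) (hV : MeasurableSet V) (r : ℝ),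
      ∫⁻ x, ν (V ∩ Metric.ball x r) ∂μ = μ (Metric.ball e r) * ν V := by
    intro V hV r
    rw [lintegral_measure_inter_ball μ ν hV]
    rw [lintegral_congr_ae (g := fun _ => μ (Metric.ball e r))]
    · simp
    · filter_upwards [ae_restrict_of_ae aeν] with y hy
      exact measure_ball_eq_of_invariant hμ hy he r
  have hratio : ∀ r : ℝ, μ (Metric.ball e r) * ν Set.univ = ν (Metric.ball e r) * μ Set.univ := by
    intro r
    rw [← hfubini _ MeasurableSet.univ, lintegral_congr_ae (g := fun _ => ν (Metric.ball e r))]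
    · simp
    · filter_upwards [aeμ] with y hy
      rw [Set.univ_inter]
      exact measure_ball_eq_of_invariant hν hy he r
  let r : ℕ → ℝ := fun n => 1 / ((n : ℝ) + 1)
  have hr : ∀ n, 0 < r n := fun n => by positivity
  have hr0 : Tendsto r atTop (𝓝 0) := tendsto_one_div_add_atTop_nhds_zero_nat
  have gpos : ∀ n, ν (Metric.ball e (r n)) ≠ 0 := fun n =>
    (measure_ball_pos_of_invariant hν hνS hν0 he (hr n)).ne'
  have gtop : ∀ n, ν (Metric.ball e (r n)) ≠ ∞ := fun n => measure_ne_top _ _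
  have hmeas : ∀ n, Measurable fun x => ν (U ∩ Metric.ball x (r n)) := by
    intro n
    have hP : MeasurableSet ({p : Esp d × Esp d | p.2 ∈ U} ∩ {p | dist p.1 p.2 < r n}) :=
      (measurable_snd hU.measurableSet).inter
        (isOpen_lt (by fun_prop) continuous_const).measurableSet
    convert measurable_measure_prodMk_left (ν := ν) hP using 3 with x
    ext y; simp [dist_comm x y]
  calc μ U = ∫⁻ x in U, 1 ∂μ := by simp
    _ ≤ ∫⁻ x in U, liminf (fun n => (ν (Metric.ball e (r n)))⁻¹ * ν (U ∩ Metric.ball x (r n)))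
          atTop ∂μ := by
        apply lintegral_mono_ae
        filter_upwards [ae_restrict_mem hU.measurableSet, ae_restrict_of_ae aeμ] with x hxU hxS
        obtain ⟨δ, hδ, hb⟩ := Metric.isOpen_iff.1 hU x hxU
        refine le_liminf_of_le (by isBoundedDefault) ?_
        filter_upwards [hr0.eventually (gt_mem_nhds hδ)] with n hn
        rw [Set.inter_eq_right.2 ((Metric.ball_subset_ball hn.le).trans hb),
          measure_ball_eq_of_invariant hν hxS he, ENNReal.inv_mul_cancel (gpos n) (gtop n)]
    _ ≤ ∫⁻ x, liminf (fun n => (ν (Metric.ball e (r n)))⁻¹ * ν (U ∩ Metric.ball x (r n)))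
          atTop ∂μ := setLIntegral_le_lintegral _ _
    _ ≤ liminf (fun n => ∫⁻ x, (ν (Metric.ball e (r n)))⁻¹ * ν (U ∩ Metric.ball x (r n)) ∂μ)
          atTop := lintegral_liminf_le fun n => (hmeas n).const_mul _
    _ = liminf (fun _ : ℕ => μ Set.univ / ν Set.univ * ν U) atTop := by
        congr 1
        ext n
        rw [lintegral_const_mul _ (hmeas n), hfubini U hU.measurableSet, ← mul_assoc]
        congr 1
        rw [ENNReal.eq_div_iff hνu hνt, mul_comm, mul_assoc, hratio, ← mul_assoc,
          ENNReal.inv_mul_cancel (gpos n) (gtop n), one_mul]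
    _ = _ := by simp

/-- Rotation invariant measures on the sphere are unique up to normalisation. -/
lemma eq_smul_of_invariant {d : ℕ} {μ ν : Measure (Esp d)} [IsFiniteMeasure μ]
    [IsFiniteMeasure ν]
    (hμ : ∀ T : Esp d ≃ₗᵢ[ℝ] Esp d, MeasurePreserving T μ μ)
    (hν : ∀ T : Esp d ≃ₗᵢ[ℝ] Esp d, MeasurePreserving T ν ν)
    (hμS : μ (uSphere d)ᶜ = 0) (hνS : ν (uSphere d)ᶜ = 0) (hμ0 : μ ≠ 0) (hν0 : ν ≠ 0) :
    μ = (μ Set.univ / ν Set.univ) • ν := by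
  have hμu : μ Set.univ ≠ 0 := by simpa using hμ0
  have hνu : ν Set.univ ≠ 0 := by simpa using hν0
  refine ext_of_generate_finite {s | IsOpen s} BorelSpace.measurable_eq isPiSystem_isOpen
    (fun U hU => le_antisymm (measure_isOpen_le_of_invariant hμ hν hμS hνS hν0 hU) ?_) ?_
  · have h := measure_isOpen_le_of_invariant hν hμ hνS hμS hμ0 hU
    calc μ Set.univ / ν Set.univ * ν U
        ≤ μ Set.univ / ν Set.univ * (ν Set.univ / μ Set.univ * μ U) := by gcongr
      _ = μ U := by
        rw [← mul_assoc, ENNReal.div_eq_inv_mul, ENNReal.div_eq_inv_mul]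
        rw [show (ν Set.univ)⁻¹ * μ Set.univ * ((μ Set.univ)⁻¹ * ν Set.univ) =
          ((ν Set.univ)⁻¹ * ν Set.univ) * ((μ Set.univ)⁻¹ * μ Set.univ) by ring,
          ENNReal.inv_mul_cancel hνu (measure_ne_top _ _),
          ENNReal.inv_mul_cancel hμu (measure_ne_top _ _), one_mul, one_mul]
  · rw [Measure.smul_apply, smul_eq_mul, ENNReal.div_mul_cancel hνu (measure_ne_top _ _)]

/-- The cone measure on the sphere: the volume of the part of the unit ball over a set. -/
def coneMeas (d : ℕ) : Measure (Esp d) :=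
  (volume.restrict (Metric.ball 0 1)).map fun x => ‖x‖⁻¹ • x

lemma measurable_normalize (d : ℕ) : Measurable fun x : Esp d => ‖x‖⁻¹ • x := by
  fun_prop

instance isFiniteMeasure_coneMeas (d : ℕ) : IsFiniteMeasure (coneMeas d) := by
  have : IsFiniteMeasure ((volume : Measure (Esp d)).restrict (Metric.ball 0 1)) :=
    ⟨by simpa using measure_ball_lt_top (μ := volume) (x := (0 : Esp d)) (r := 1)⟩
  unfold coneMeas
  infer_instance

lemma coneMeas_apply {d : ℕ} {A : Set (Esp d)} (hA : MeasurableSet A) :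
    coneMeas d A = volume {x : Esp d | ‖x‖ < 1 ∧ ‖x‖⁻¹ • x ∈ A} := by
  rw [coneMeas, Measure.map_apply (measurable_normalize d) hA,
    Measure.restrict_apply (measurable_normalize d hA)]
  congr 1; ext x; simp [and_comm]

lemma measurableSet_uSphere (d : ℕ) : MeasurableSet (uSphere d) :=
  Metric.isClosed_sphere.measurableSet

lemma coneMeas_compl (d : ℕ) : coneMeas d (uSphere d)ᶜ = 0 := by
  rw [coneMeas_apply (measurableSet_uSphere d).compl]
  refine measure_mono_null (t := {0}) ?_ (measure_singleton _)
  rintro x ⟨-, hx⟩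
  by_contra h0
  apply hx
  have : ‖x‖ ≠ 0 := by simpa using h0
  simp [uSphere, norm_smul, this]

lemma coneMeas_ne_zero (d : ℕ) : coneMeas d ≠ 0 := by
  rw [← Measure.measure_univ_ne_zero, coneMeas_apply MeasurableSet.univ]
  have := Metric.measure_ball_pos (volume : Measure (Esp d)) 0 one_pos
  simpa [Metric.ball] using this.ne'

lemma coneMeas_invariant (d : ℕ) (T : Esp d ≃ₗᵢ[ℝ] Esp d) :
    MeasurePreserving T (coneMeas d) (coneMeas d) := by
  refine ⟨T.continuous.measurable, ?_⟩
  ext A hA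
  rw [Measure.map_apply T.continuous.measurable hA,
    coneMeas_apply (T.continuous.measurable hA), coneMeas_apply hA,
    ← (T.measurePreserving).measure_preimage_equiv (f := T.toMeasurableEquiv)
      {x : Esp d | ‖x‖ < 1 ∧ ‖x‖⁻¹ • x ∈ A}]
  congr 1; ext x; simp

lemma sigmaMeas_invariant (d : ℕ) (T : Esp d ≃ₗᵢ[ℝ] Esp d) :
    MeasurePreserving T (sigmaMeas d) (sigmaMeas d) := by
  have h := (T.toIsometryEquiv.measurePreserving_hausdorffMeasure (d : ℝ)).restrict_preimage
    (measurableSet_uSphere d)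
  have h2 : T.toIsometryEquiv ⁻¹' uSphere d = uSphere d := by
    ext x; simp [uSphere]
  rw [h2] at h
  exact h

lemma sigmaMeas_compl (d : ℕ) : sigmaMeas d (uSphere d)ᶜ = 0 := by
  rw [sigmaMeas, Measure.restrict_apply (measurableSet_uSphere d).compl]; simp

/-- Up to a positive factor the spherical Lebesgue measure is the cone measure. -/
lemma sigmaMeas_eq_smul_coneMeas {d : ℕ} (h : omegaTot d ≠ 0) :
    ∃ c : ℝ≥0∞, sigmaMeas d = c • coneMeas d := by
  have h0 : sigmaMeas d (uSphere d) ≠ 0 := fun h' => h (by simp [omegaTot, h'])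
  have ht : sigmaMeas d (uSphere d) ≠ ∞ := fun h' => h (by simp [omegaTot, h'])
  have : IsFiniteMeasure (sigmaMeas d) := by
    refine ⟨?_⟩
    rw [← Set.union_compl_self (uSphere d)]
    refine (measure_union_le _ _).trans_lt ?_
    rw [sigmaMeas_compl, add_zero]
    exact ht.lt_top
  refine ⟨_, eq_smul_of_invariant (sigmaMeas_invariant d) (coneMeas_invariant d)
    (sigmaMeas_compl d) (coneMeas_compl d) (fun h' => h0 (by simp [h'])) (coneMeas_ne_zero d)⟩

/-- The volume of the unit ball of `ℝ^n`, in coordinates. -/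
def unitBallVol (n : ℕ) : ℝ≥0∞ := volume {y : Fin n → ℝ | ∑ i, y i ^ 2 ≤ 1}

lemma volume_sum_sq_le {n : ℕ} {h : ℝ} (hh : 0 < h) :
    volume {y : Fin n → ℝ | ∑ i, y i ^ 2 ≤ h ^ 2} = ENNReal.ofReal (h ^ n) * unitBallVol n := by
  have := Measure.addHaar_preimage_smul (volume : Measure (Fin n → ℝ)) (inv_ne_zero hh.ne')
    {y : Fin n → ℝ | ∑ i, y i ^ 2 ≤ 1}
  rw [unitBallVol]
  convert this using 2
  · ext y
    have h2 : 0 < h ^ 2 := by positivity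
    simp only [Set.mem_ofPred_eq, Set.mem_preimage, Pi.smul_apply, smul_eq_mul, mul_pow,
      ← Finset.mul_sum, inv_pow]
    rw [inv_mul_le_iff₀ h2, mul_one]
  · simp [abs_of_pos hh]

/-- The volume of an orthogonal product of two segments and a ball. -/
lemma volume_box {n : ℕ} {p q : Esp (n + 1)} (hp : ‖p‖ = 1) (hq : ‖q‖ = 1)
    (hpq : ⟪p, q⟫ = 0) (s₀ s₁ t₀ t₁ : ℝ) {h : ℝ} (hh : 0 < h) :
    volume {x : Esp (n + 1) | ⟪p, x⟫ ∈ Set.Icc s₀ s₁ ∧ ⟪q, x⟫ ∈ Set.Icc t₀ t₁ ∧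
      ‖x‖ ^ 2 - ⟪p, x⟫ ^ 2 - ⟪q, x⟫ ^ 2 ≤ h ^ 2} =
    ENNReal.ofReal (s₁ - s₀) * (ENNReal.ofReal (t₁ - t₀) *
      (ENNReal.ofReal (h ^ n) * unitBallVol n)) := by
  let v : Fin (n + 2) → Esp (n + 1) := fun i => if i = 0 then p else q
  have hv : Orthonormal ℝ (({0, 1} : Set (Fin (n + 2))).domRestrict v) := by
    constructor
    · rintro ⟨i, hi⟩
      rcases hi with rfl | rfl <;> simp [v, hp, hq, Set.domRestrict]
    · rintro ⟨i, hi⟩ ⟨j, hj⟩ hij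
      rcases hi with rfl | rfl <;> rcases hj with rfl | rfl <;>
        simp_all [v, real_inner_comm, Set.domRestrict]
  obtain ⟨b, hb⟩ := hv.exists_orthonormalBasis_extension_of_card_eq (by simp)
  have hb0 : b 0 = p := by rw [hb 0 (by simp)]; simp [v]
  have hb1 : b 1 = q := by rw [hb 1 (by simp)]; simp [v]
  have m1 := b.measurePreserving_repr
  have m2 := PiLp.volume_preserving_ofLp (Fin (n + 2))
  have m3 := volume_preserving_piFinSuccAbove (fun _ : Fin (n + 2) => ℝ) 0
  have m4 := (MeasurePreserving.id (volume : Measure ℝ)).prod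
    (volume_preserving_piFinSuccAbove (fun _ : Fin (n + 1) => ℝ) 0)
  have m := m4.comp (m3.comp (m2.comp m1))
  have hW : MeasurableSet {y : Fin n → ℝ | ∑ i, y i ^ 2 ≤ h ^ 2} :=
    (isClosed_le (by fun_prop) continuous_const).measurableSet
  have key := m.measure_preimage
    (measurableSet_Icc (a := s₀) (b := s₁) |>.prod
      ((measurableSet_Icc (a := t₀) (b := t₁)).prod hW)).nullMeasurableSet
  rw [Measure.prod_prod, Measure.volume_eq_prod, Measure.prod_prod, volume_sum_sq_le hh,
    Real.volume_Icc, Real.volume_Icc] at key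
  rw [← key]
  congr 1
  ext x
  have hn : ‖x‖ ^ 2 = ∑ i, (b.repr x i) ^ 2 := by
    rw [← b.repr.norm_map x, EuclideanSpace.norm_sq_eq]; simp
  rw [Fin.sum_univ_succ, Fin.sum_univ_succ] at hn
  have c0 : b.repr x 0 = ⟪p, x⟫ := by rw [b.repr_apply_apply, hb0]
  have c1 : b.repr x 1 = ⟪q, x⟫ := by rw [b.repr_apply_apply, hb1]
  simp only [Fin.succ_zero_eq_one] at hn
  rw [c0, c1] at hn
  have e1 : ‖x‖ ^ 2 - ⟪p, x⟫ ^ 2 - ⟪q, x⟫ ^ 2 = ∑ i : Fin n, (b.repr x i.succ.succ) ^ 2 := by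
    rw [hn]; ring
  rw [Set.mem_ofPred_eq, e1, ← c0, ← c1]
  simp [MeasurableEquiv.piFinSuccAbove, Fin.insertNthEquiv, Fin.tail]

section ConvexCone

variable {d : ℕ} {C K : Set (Esp d)}

lemma cone_add_mem (hconv : Convex ℝ C) (hcone : ∀ x ∈ C, ∀ t : ℝ, 0 ≤ t → t • x ∈ C)
    {x y : Esp d} (hx : x ∈ C) (hy : y ∈ C) : x + y ∈ C := by
  have h := hcone _ (hconv hx hy (a := 1 / 2) (b := 1 / 2) (by norm_num) (by norm_num)
    (by norm_num)) 2 (by norm_num)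
  convert h using 1
  simp [smul_smul]

lemma cone_mem_of_smul_mem (hcone : ∀ x ∈ C, ∀ t : ℝ, 0 ≤ t → t • x ∈ C) {x : Esp d} {t : ℝ}
    (ht : 0 < t) (h : t • x ∈ C) : x ∈ C := by
  have := hcone _ h t⁻¹ (by positivity)
  rwa [smul_smul, inv_mul_cancel₀ ht.ne', one_smul] at this

/-- A convex cone that is not a subspace contains no ball around the origin. -/
lemma radius_le_norm_of_ball_subset_cone (hcone : ∀ x ∈ C, ∀ t : ℝ, 0 ≤ t → t • x ∈ C)
    (hsub : ∀ L : Submodule ℝ (Esp d), C ≠ (L : Set (Esp d))) {z : Esp d} {ρ : ℝ}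
    (h : Metric.ball z ρ ⊆ C) : ρ ≤ ‖z‖ := by
  by_contra! hlt
  refine hsub ⊤ ?_
  rw [Submodule.top_coe, Set.eq_univ_iff_forall]
  intro x
  have hpos : 0 < (ρ - ‖z‖) / (‖x‖ + 1) := div_pos (by linarith) (by positivity)
  refine cone_mem_of_smul_mem hcone hpos (h ?_)
  rw [mem_ball_iff_norm]
  have h1 : (ρ - ‖z‖) / (‖x‖ + 1) * ‖x‖ < ρ - ‖z‖ := by
    rw [div_mul_eq_mul_div, div_lt_iff₀ (by positivity)]
    nlinarith [norm_nonneg x]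
  calc _ ≤ ‖((ρ - ‖z‖) / (‖x‖ + 1)) • x‖ + ‖z‖ := norm_sub_le _ _
    _ < ρ := by rw [norm_smul, Real.norm_of_nonneg hpos.le]; linarith

lemma radius_le_pi_of_cap_subset (hcone : ∀ x ∈ C, ∀ t : ℝ, 0 ≤ t → t • x ∈ C)
    (hsub : ∀ L : Submodule ℝ (Esp d), C ≠ (L : Set (Esp d))) (hK : K = C ∩ uSphere d)
    {e : Esp d} {r : ℝ} (h : cap e r ⊆ K) : r ≤ π := by
  by_contra! hlt
  have hS : uSphere d ⊆ C := fun x hx => by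
    have : x ∈ K := h ⟨hx, (Real.arccos_le_pi _).trans hlt.le⟩
    rw [hK] at this; exact this.1
  have hball : Metric.ball (0 : Esp d) 1 ⊆ C := by
    intro x _
    by_cases hx : x = 0
    · obtain ⟨y, hy⟩ : (uSphere d).Nonempty := by simp [uSphere]
      simpa [hx] using hcone y (hS hy) 0 le_rfl
    · have hn : 0 < ‖x‖ := norm_pos_iff.2 hx
      refine cone_mem_of_smul_mem hcone (inv_pos.2 hn) (hS ?_)
      simp [uSphere, norm_smul, hn.ne']
  have := radius_le_norm_of_ball_subset_cone hcone hsub hball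
  simp at this
  linarith

lemma bddAbove_cap_radii (hcone : ∀ x ∈ C, ∀ t : ℝ, 0 ≤ t → t • x ∈ C)
    (hsub : ∀ L : Submodule ℝ (Esp d), C ≠ (L : Set (Esp d))) (hK : K = C ∩ uSphere d)
    (e : Esp d) : BddAbove {r : ℝ | 0 ≤ r ∧ cap e r ⊆ K} :=
  ⟨π, fun _ hr => radius_le_pi_of_cap_subset hcone hsub hK hr.2⟩

lemma rcent_le_pi (hcone : ∀ x ∈ C, ∀ t : ℝ, 0 ≤ t → t • x ∈ C)
    (hsub : ∀ L : Submodule ℝ (Esp d), C ≠ (L : Set (Esp d))) (hK : K = C ∩ uSphere d)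
    (e : Esp d) : rcent d K e ≤ π :=
  Real.sSup_le (fun _ hr => radius_le_pi_of_cap_subset hcone hsub hK hr.2) Real.pi_pos.le

lemma rcent_le_SigmaR (hcone : ∀ x ∈ C, ∀ t : ℝ, 0 ≤ t → t • x ∈ C)
    (hsub : ∀ L : Submodule ℝ (Esp d), C ≠ (L : Set (Esp d))) (hK : K = C ∩ uSphere d)
    {e : Esp d} (he : e ∈ K) : rcent d K e ≤ SigmaR d K :=
  le_csSup ⟨π, by rintro _ ⟨x, _, rfl⟩; exact rcent_le_pi hcone hsub hK x⟩ ⟨e, he, rfl⟩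

lemma mem_of_geo_lt_rcent {e x : Esp d} (hx : x ∈ uSphere d) (h : geo x e < rcent d K e) :
    x ∈ K := by
  have h0 : 0 ≤ geo x e := Real.arccos_nonneg _
  have hne : {r : ℝ | 0 ≤ r ∧ cap e r ⊆ K}.Nonempty := by
    by_contra hemp
    rw [Set.not_nonempty_iff_eq_empty] at hemp
    rw [rcent, hemp, Real.sSup_empty] at h
    linarith
  obtain ⟨r, hr, hlt⟩ := exists_lt_of_lt_csSup hne h
  exact hr.2 ⟨hx, hlt.le⟩

lemma cone_mem_of_cos_lt (hcone : ∀ x ∈ C, ∀ t : ℝ, 0 ≤ t → t • x ∈ C)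
    (hK : K = C ∩ uSphere d) {e z : Esp d} (he : e ∈ uSphere d) (hz : z ≠ 0) {s : ℝ}
    (hs0 : 0 ≤ s) (hsπ : s ≤ π) (hs : s ≤ rcent d K e) (h : Real.cos s * ‖z‖ < ⟪z, e⟫) :
    z ∈ C := by
  have hn : 0 < ‖z‖ := norm_pos_iff.2 hz
  have he1 : ‖e‖ = 1 := by simpa [uSphere] using he
  have hS : ‖z‖⁻¹ • z ∈ uSphere d := by simp [uSphere, norm_smul, hn.ne']
  have hgeo : geo (‖z‖⁻¹ • z) e < s := by
    rw [geo, ← Real.arccos_cos hs0 hsπ, real_inner_smul_left]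
    refine Real.arccos_lt_arccos (Real.neg_one_le_cos s) ?_ ?_
    · rw [inv_mul_eq_div, lt_div_iff₀ hn]; exact h
    · rw [inv_mul_eq_div, div_le_one hn]
      simpa [he1] using real_inner_le_norm z e
  have := mem_of_geo_lt_rcent hS (hgeo.trans_le hs)
  rw [hK] at this
  exact cone_mem_of_smul_mem hcone (inv_pos.2 hn) this.1

lemma ball_subset_cone_of_le_rcent (hcone : ∀ x ∈ C, ∀ t : ℝ, 0 ≤ t → t • x ∈ C)
    (hK : K = C ∩ uSphere d) {e : Esp d} (he : e ∈ uSphere d) {s : ℝ}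
    (hs0 : 0 ≤ s) (hs2 : s ≤ π / 2) (hs : s ≤ rcent d K e) :
    Metric.ball e (Real.sin s) ⊆ C := by
  intro z hz
  rw [mem_ball_iff_norm] at hz
  have he1 : ‖e‖ = 1 := by simpa [uSphere] using he
  have hsin := Real.sin_le_one s
  have hcos : 0 ≤ Real.cos s := Real.cos_nonneg_of_mem_Icc ⟨by linarith [Real.pi_pos], hs2⟩
  have hsq := norm_sub_sq_real z e
  rw [he1] at hsq
  have hlt : ‖z - e‖ ^ 2 < Real.sin s ^ 2 := by
    have := norm_nonneg (z - e)
    gcongr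
  have hcs := Real.sin_sq_add_cos_sq s
  have hin : 0 < ⟪z, e⟫ := by nlinarith [sq_nonneg ‖z‖]
  have hz0 : z ≠ 0 := by rintro rfl; simp at hin
  refine cone_mem_of_cos_lt hcone hK he hz0 hs0 (by linarith [Real.pi_pos]) hs ?_
  refine lt_of_pow_lt_pow_left₀ 2 hin.le ?_
  have hn : 0 < ‖z‖ ^ 2 := by positivity
  nlinarith [sq_nonneg (‖z‖ ^ 2 - ⟪z, e⟫)]

lemma cap_subset_of_ball_subset_cone (hcone : ∀ x ∈ C, ∀ t : ℝ, 0 ≤ t → t • x ∈ C)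
    (hK : K = C ∩ uSphere d) {z : Esp d} {ρ s : ℝ} (hz : 0 < ‖z‖) (hs0 : 0 ≤ s)
    (hs2 : s < π / 2) (h : Metric.ball z ρ ⊆ C) (hρ : Real.sin s * ‖z‖ < ρ) :
    cap (‖z‖⁻¹ • z) s ⊆ K := by
  rintro x ⟨hxS, hx⟩
  have hx1 : ‖x‖ = 1 := by simpa [uSphere] using hxS
  have hcos : 0 < Real.cos s := Real.cos_pos_of_mem_Ioo ⟨by linarith [Real.pi_pos], hs2⟩
  have hsin : 0 ≤ Real.sin s := Real.sin_nonneg_of_nonneg_of_le_pi hs0 (by linarith [Real.pi_pos])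
  have hin : Real.cos s * ‖z‖ ≤ ⟪x, z⟫ := by
    have h1 : Real.cos s ≤ Real.cos (geo x (‖z‖⁻¹ • z)) :=
      Real.cos_le_cos_of_nonneg_of_le_pi (Real.arccos_nonneg _) (by linarith [Real.pi_pos]) hx
    have h2 := abs_le.1 (abs_real_inner_le_norm x (‖z‖⁻¹ • z))
    rw [hx1, norm_smul, norm_inv, norm_norm, inv_mul_cancel₀ hz.ne', one_mul] at h2
    rw [geo, Real.cos_arccos h2.1 h2.2, real_inner_smul_right, inv_mul_eq_div,
      le_div_iff₀ hz] at h1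
    exact h1
  have ht : 0 < ⟪x, z⟫ := lt_of_lt_of_le (by positivity) hin
  rw [hK]
  refine ⟨cone_mem_of_smul_mem hcone ht (h ?_), hxS⟩
  rw [mem_ball_iff_norm]
  refine lt_of_le_of_lt ?_ hρ
  refine le_of_sq_le_sq ?_ (by positivity)
  rw [norm_sub_sq_real, norm_smul, real_inner_smul_left, hx1, Real.norm_of_nonneg ht.le]
  have hsq : (Real.cos s * ‖z‖) ^ 2 ≤ ⟪x, z⟫ ^ 2 := by gcongr
  nlinarith [Real.sin_sq_add_cos_sq s]

/-- A convex body is contained in the hemisphere centred at any of its incentres. -/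
lemma inner_nonneg_of_rcent_eq_SigmaR (hconv : Convex ℝ C)
    (hcone : ∀ x ∈ C, ∀ t : ℝ, 0 ≤ t → t • x ∈ C)
    (hsub : ∀ L : Submodule ℝ (Esp d), C ≠ (L : Set (Esp d))) (hK : K = C ∩ uSphere d)
    {e : Esp d} (he : e ∈ K) (hr : 0 < rcent d K e) (hmax : rcent d K e = SigmaR d K)
    {x : Esp d} (hx : x ∈ K) : 0 ≤ ⟪x, e⟫ := by
  by_contra! hneg
  have heS : e ∈ uSphere d := by rw [hK] at he; exact he.2
  have he1 : ‖e‖ = 1 := by simpa [uSphere] using heS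
  have hxC : x ∈ C ∧ x ∈ uSphere d := by rwa [hK] at hx
  have hx1 : ‖x‖ = 1 := by simpa [uSphere] using hxC.2
  set s := min (rcent d K e) (π / 2) with hs
  have hs0 : 0 < s := lt_min hr (by positivity)
  have hball := ball_subset_cone_of_le_rcent hcone hK heS hs0.le (min_le_right _ _) (min_le_left _ _)
  set z := e + (-⟪x, e⟫) • x with hzdef
  have hzball : Metric.ball z (Real.sin s) ⊆ C := by
    intro y hy
    have h1 : y - (-⟪x, e⟫) • x ∈ C := hball (by
      rw [mem_ball_iff_norm] at hy ⊢
      convert hy using 2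
      rw [hzdef]; abel)
    simpa using cone_add_mem hconv hcone h1 (hcone x hxC.1 (-⟪x, e⟫) (by linarith))
  have hle := radius_le_norm_of_ball_subset_cone hcone hsub hzball
  have hsinpos : 0 < Real.sin s :=
    Real.sin_pos_of_pos_of_lt_pi hs0 (by linarith [Real.pi_pos, min_le_right (rcent d K e) (π / 2)])
  have hzpos : 0 < ‖z‖ := hsinpos.trans_le hle
  have hz1 : ‖z‖ < 1 := by
    have : ‖z‖ ^ 2 = 1 - ⟪x, e⟫ ^ 2 := by
      rw [hzdef, norm_add_sq_real, norm_smul, real_inner_smul_right, he1, hx1,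
        real_inner_comm, Real.norm_eq_abs, mul_one, sq_abs]
      ring
    nlinarith
  have hslt : s < π / 2 := by
    refine lt_of_le_of_ne (min_le_right _ _) fun h => ?_
    rw [h, Real.sin_pi_div_two] at hle
    linarith
  have hsr : s = rcent d K e := by
    rcases min_choice (rcent d K e) (π / 2) with h | h
    · exact h
    · exact absurd (hs.trans h) hslt.ne
  obtain ⟨t, ht⟩ : ∃ t, Real.sin t * ‖z‖ < Real.sin s ∧ t < π / 2 ∧ s < t := by
    have h1 : ∀ᶠ t in 𝓝 s, Real.sin t * ‖z‖ < Real.sin s :=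
      (ContinuousAt.tendsto (f := fun t => Real.sin t * ‖z‖) (by fun_prop)).eventually
        (gt_mem_nhds (by nlinarith))
    have h2 : ∀ᶠ t in 𝓝[>] s, Real.sin t * ‖z‖ < Real.sin s ∧ t < π / 2 ∧ s < t :=
      (h1.filter_mono nhdsWithin_le_nhds).and
        (((gt_mem_nhds hslt).filter_mono nhdsWithin_le_nhds).and self_mem_nhdsWithin)
    exact h2.exists
  have hcap := cap_subset_of_ball_subset_cone hcone hK hzpos (hs0.trans ht.2.2).le ht.2.1 hzball ht.1
  have hzK : ‖z‖⁻¹ • z ∈ K := by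
    rw [hK]
    refine ⟨hcone _ (hzball (Metric.mem_ball_self hsinpos)) _ (by positivity), ?_⟩
    simp [uSphere, norm_smul, hzpos.ne']
  have h1 : t ≤ rcent d K (‖z‖⁻¹ • z) :=
    le_csSup (bddAbove_cap_radii hcone hsub hK _) ⟨(hs0.trans ht.2.2).le, hcap⟩
  have h2 := rcent_le_SigmaR hcone hsub hK hzK
  linarith [ht.2.2]

lemma exists_le_geo_of_le_thetaR (hclosed : IsClosed C) (hconv : Convex ℝ C)
    (hcone : ∀ x ∈ C, ∀ t : ℝ, 0 ≤ t → t • x ∈ C)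
    (hsub : ∀ L : Submodule ℝ (Esp d), C ≠ (L : Set (Esp d))) (hK : K = C ∩ uSphere d)
    {e : Esp d} (he : e ∈ K) {a ε : ℝ} (ha : 0 < a) (har : a ≤ rcent d K e)
    (hmax : rcent d K e = SigmaR d K) (hε : ε ≤ thetaR d K) :
    ∃ x ∈ K, a + ε ≤ geo x e ∧ geo x e ≤ π / 2 := by
  have hin : ∀ x ∈ K, geo x e ≤ π / 2 := fun x hx => by
    rw [geo, Real.arccos_le_pi_div_two]
    exact inner_nonneg_of_rcent_eq_SigmaR hconv hcone hsub hK he (ha.trans_le har) hmax hx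
  have hcomp : IsCompact K := by
    rw [hK]; exact (isCompact_sphere _ _).inter_left hclosed
  obtain ⟨x, hx, hxmax⟩ := hcomp.exists_isMaxOn ⟨e, he⟩ (f := fun x => geo x e)
    (Continuous.continuousOn (by unfold geo; fun_prop))
  refine ⟨x, hx, ?_, hin x hx⟩
  have hR : Rcent d K e ≤ geo x e := by
    refine csInf_le ⟨0, fun r hr => hr.1⟩ ⟨Real.arccos_nonneg _, fun y hy => ⟨?_, hxmax hy⟩⟩
    rw [hK] at hy; exact hy.2
  have hθ : thetaR d K ≤ Rcent d K e - rcent d K e := by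
    refine csInf_le ⟨-π, ?_⟩ ⟨e, ⟨he, hmax⟩, rfl⟩
    rintro _ ⟨y, -, rfl⟩
    have h1 : 0 ≤ Rcent d K y := Real.sInf_nonneg fun r hr => hr.1
    have h2 := rcent_le_pi hcone hsub hK y
    simp only
    linarith
  linarith

lemma cap_subset_of_le_rcent (hclosed : IsClosed C)
    (hcone : ∀ x ∈ C, ∀ t : ℝ, 0 ≤ t → t • x ∈ C) (hK : K = C ∩ uSphere d)
    {e : Esp d} (he : e ∈ K) {a : ℝ} (ha : 0 < a) (ha2 : a < π / 2) (har : a ≤ rcent d K e) :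
    cap e a ⊆ K := by
  have heS : e ∈ uSphere d := by rw [hK] at he; exact he.2
  have he1 : ‖e‖ = 1 := by simpa [uSphere] using heS
  rintro x ⟨hxS, hx⟩
  have hx1 : ‖x‖ = 1 := by simpa [uSphere] using hxS
  have h2 := abs_le.1 (abs_real_inner_le_norm x e)
  rw [hx1, he1, one_mul] at h2
  have hcos : 0 < Real.cos a := Real.cos_pos_of_mem_Ioo ⟨by linarith, ha2⟩
  have hcos1 : Real.cos a < 1 := by
    simpa using Real.cos_lt_cos_of_nonneg_of_le_pi_div_two le_rfl ha2.le ha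
  have hin : Real.cos a ≤ ⟪x, e⟫ := by
    have h1 : Real.cos a ≤ Real.cos (geo x e) :=
      Real.cos_le_cos_of_nonneg_of_le_pi (Real.arccos_nonneg _) (by linarith [Real.pi_pos]) hx
    rwa [geo, Real.cos_arccos h2.1 h2.2] at h1
  rw [hK]
  refine ⟨?_, hxS⟩
  have hmem : ∀ t : ℝ, 0 < t → x + t • e ∈ C := by
    intro t ht
    have hie : ⟪x + t • e, e⟫ = ⟪x, e⟫ + t := by
      rw [inner_add_left, real_inner_smul_left, real_inner_self_eq_norm_sq, he1]; ring
    have hpos : 0 < ⟪x + t • e, e⟫ := by rw [hie]; linarith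
    refine cone_mem_of_cos_lt hcone hK heS ?_ ha.le (by linarith) har ?_
    · intro h; rw [h] at hpos; simp at hpos
    · refine lt_of_pow_lt_pow_left₀ 2 hpos.le ?_
      rw [hie, mul_pow, norm_add_sq_real, norm_smul, real_inner_smul_right, hx1, he1,
        Real.norm_of_nonneg ht.le]
      have hc2 : Real.cos a ^ 2 < 1 := by nlinarith
      have hx2 : Real.cos a ^ 2 ≤ ⟪x, e⟫ ^ 2 := by gcongr
      nlinarith [mul_pos ht (hcos.trans_le hin), mul_pos ht ht,
        mul_pos (mul_pos ht (hcos.trans_le hin)) (sub_pos.2 hc2),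
        mul_pos (mul_pos ht ht) (sub_pos.2 hc2)]
  have hlim : Tendsto (fun t : ℝ => x + t • e) (𝓝[>] 0) (𝓝 x) := by
    have : Tendsto (fun t : ℝ => x + t • e) (𝓝 0) (𝓝 (x + (0 : ℝ) • e)) :=
      ContinuousAt.tendsto (f := fun t : ℝ => x + t • e) (by fun_prop)
    rw [zero_smul, add_zero] at this
    exact this.mono_left nhdsWithin_le_nhds
  exact hclosed.mem_of_tendsto hlim (eventually_mem_of_tendsto_nhdsWithin tendsto_id |>.mono hmem)

end ConvexCone

lemma sin_sub_sin_lower {a ε β : ℝ} (ha : 0 < a) (hε : 0 < ε) (hβ : a + ε ≤ β)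
    (hβ2 : β ≤ π / 2) :
    2 / π * ε * Real.cos β ≤ Real.sin β - Real.sin a ∧
      2 / π ^ 2 * (π / 2 - a) * ε ≤ Real.sin β - Real.sin a := by
  have hπ := Real.pi_pos
  have h1 : 2 / π * (ε / 2) ≤ Real.sin ((β - a) / 2) :=
    le_trans (by gcongr; linarith) (Real.mul_le_sin (x := (β - a) / 2) (by linarith) (by linarith))
  have h2 : 2 / π * ((π / 2 - a) / 2) ≤ Real.cos ((β + a) / 2) := by
    rw [← Real.sin_pi_div_two_sub]
    exact le_trans (by gcongr; linarith)
      (Real.mul_le_sin (x := π / 2 - (β + a) / 2) (by linarith) (by linarith))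
  have h3 : Real.cos β ≤ Real.cos ((β + a) / 2) :=
    Real.cos_le_cos_of_nonneg_of_le_pi (by linarith) (by linarith) (by linarith)
  have h4 : 0 ≤ Real.cos β := Real.cos_nonneg_of_mem_Icc ⟨by linarith, hβ2⟩
  have h5 : 0 ≤ Real.sin ((β - a) / 2) := le_trans (by positivity) h1
  rw [Real.sin_sub_sin]
  constructor
  · calc 2 / π * ε * Real.cos β = 2 * (2 / π * (ε / 2)) * Real.cos β := by ring
      _ ≤ _ := by gcongr
  · calc 2 / π ^ 2 * (π / 2 - a) * ε
        = 2 * (2 / π * (ε / 2)) * (2 / π * ((π / 2 - a) / 2)) := by field_simp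
      _ ≤ _ := by
        have : 0 ≤ 2 / π * ((π / 2 - a) / 2) := mul_nonneg (by positivity) (by linarith)
        gcongr

lemma mul_lt_of_sq_sub_sq_le {ρ η N G s t c : ℝ} (hρ : 1 / 2 ≤ ρ) (hG : 0 < G) (hs : 0 ≤ s)
    (hs1 : s ≤ 1) (hη : η ^ 2 ≤ G / 10) (hc : η * c ≤ G / 5) (ht : t = G + s)
    (h : N ^ 2 - ρ ^ 2 - η ^ 2 ≤ G / 8) : s * N < ρ * t - η * c := by
  have hW : 0 ≤ η ^ 2 + G / 8 := by positivity
  have hNle : N ≤ ρ + (η ^ 2 + G / 8) := by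
    refine le_of_sq_le_sq ?_ (by positivity)
    have h1 := mul_nonneg (sub_nonneg.2 hρ) hW
    have h2 := sq_nonneg (η ^ 2 + G / 8)
    calc N ^ 2 ≤ ρ ^ 2 + (η ^ 2 + G / 8) := by linarith
      _ ≤ ρ ^ 2 + (η ^ 2 + G / 8) + 2 * ((ρ - 1 / 2) * (η ^ 2 + G / 8)) + (η ^ 2 + G / 8) ^ 2 := by
        linarith
      _ = (ρ + (η ^ 2 + G / 8)) ^ 2 := by ring
  have h1 : s * N ≤ s * (ρ + (η ^ 2 + G / 8)) := mul_le_mul_of_nonneg_left hNle hs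
  have h2 : s * (η ^ 2 + G / 8) ≤ 1 * (η ^ 2 + G / 8) := mul_le_mul_of_nonneg_right hs1 hW
  have h3 : 1 / 2 * G ≤ ρ * G := mul_le_mul_of_nonneg_right hρ hG.le
  rw [ht]
  linarith

/-- Points of the box over the direction orthogonal to the apex lie in the region cut off by the
tangent cone. -/
lemma sin_mul_lt_of_mem_box {a ε β ρ η N : ℝ} (ha : 0 < a) (hε : 0 < ε) (hε1 : ε ≤ 1)
    (hβ : a + ε ≤ β) (hβ2 : β ≤ π / 2) (hρ : 1 / 2 ≤ ρ) (hρ2 : ρ ≤ 9 / 10) (hη : 0 ≤ η)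
    (hη2 : η ≤ ε / 8) (hN : 0 ≤ N)
    (h : N ^ 2 - ρ ^ 2 - η ^ 2 ≤ (Real.sqrt ((π / 2 - a) * ε) / (2 * π)) ^ 2) :
    N < 1 ∧ Real.sin a * N < ρ * Real.sin β - η * Real.cos β := by
  have hπ := Real.pi_gt_three
  have hπ4 := Real.pi_lt_d2
  have hq : 0 < π / 2 - a := by linarith
  rw [div_pow, Real.sq_sqrt (by positivity)] at h
  obtain ⟨h1, h2⟩ := sin_sub_sin_lower ha hε hβ hβ2
  set G := Real.sin β - Real.sin a with hG
  have hGpos : 0 < G := lt_of_lt_of_le (by positivity) h2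
  have hsa0 : 0 ≤ Real.sin a := Real.sin_nonneg_of_nonneg_of_le_pi ha.le (by linarith)
  have hsa1 : Real.sin a ≤ 1 := Real.sin_le_one a
  have hcos : 0 ≤ Real.cos β := Real.cos_nonneg_of_mem_Icc ⟨by linarith, hβ2⟩
  have hh : (π / 2 - a) * ε / (2 * π) ^ 2 ≤ G / 8 := by
    have : (π / 2 - a) * ε / (2 * π) ^ 2 = (2 / π ^ 2 * (π / 2 - a) * ε) / 8 := by
      field_simp; ring
    rw [this]; gcongr
  have hηc : η * Real.cos β ≤ G / 5 := by
    have e1 : ε * Real.cos β ≤ π / 2 * G := by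
      calc ε * Real.cos β = π / 2 * (2 / π * ε * Real.cos β) := by field_simp
        _ ≤ _ := by gcongr
    have : η * Real.cos β ≤ ε / 8 * Real.cos β := by gcongr
    nlinarith
  have hεq : (π / 2 - a) * ε ≤ π ^ 2 / 2 * G := by
    calc (π / 2 - a) * ε = π ^ 2 / 2 * (2 / π ^ 2 * (π / 2 - a) * ε) := by field_simp
      _ ≤ _ := by gcongr
  have hη3 : η ^ 2 ≤ G / 10 := by
    have e1 : η ^ 2 ≤ (ε / 8) ^ 2 := by gcongr
    have e2 : ε * ε ≤ (π / 2 - a) * ε := by gcongr; linarith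
    have e3 : π ^ 2 ≤ 10 := by nlinarith
    nlinarith
  have hh2 : (π / 2 - a) * ε / (2 * π) ^ 2 ≤ 1 / 10 := by
    rw [div_le_iff₀ (by positivity)]
    have : (π / 2 - a) * ε ≤ π / 2 * 1 := by gcongr; linarith
    nlinarith
  have hη4 : η ^ 2 ≤ 1 / 64 := by nlinarith
  have hρ4 : ρ ^ 2 ≤ 81 / 100 := by nlinarith
  exact ⟨(sq_lt_one_iff₀ hN).1 (by linarith),
    mul_lt_of_sq_sub_sq_le hρ hGpos hsa0 hsa1 hη3 hηc (by rw [hG]; ring) (h.trans hh)⟩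

lemma orthogonal_partner {d : ℕ} {e x : Esp d} (he : ‖e‖ = 1) (hx : ‖x‖ = 1) {s : ℝ}
    (hs : 0 < s) (hsc : s ^ 2 + ⟪x, e⟫ ^ 2 = 1) :
    ‖s⁻¹ • (x - ⟪x, e⟫ • e)‖ = 1 ∧ ⟪e, s⁻¹ • (x - ⟪x, e⟫ • e)⟫ = 0 := by
  constructor
  · have : ‖x - ⟪x, e⟫ • e‖ ^ 2 = s ^ 2 := by
      rw [norm_sub_sq_real, norm_smul, real_inner_smul_right, he, hx, Real.norm_eq_abs, mul_one,
        sq_abs]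
      linarith
    have h2 : ‖x - ⟪x, e⟫ • e‖ = s := (sq_eq_sq₀ (norm_nonneg _) hs.le).1 this
    rw [norm_smul, h2, norm_inv, Real.norm_of_nonneg hs.le, inv_mul_cancel₀ hs.ne']
  · rw [real_inner_smul_right, inner_sub_right, real_inner_smul_right,
      real_inner_self_eq_norm_sq, he, real_inner_comm]
    ring

section Regions

variable {n : ℕ} {e x₀ : Esp (n + 1)} {a ε β : ℝ}

/-- The unit vectors whose orthogonal hyperplane meets the cap `B(e, a)`. -/
def beltSet {d : ℕ} (e : Esp d) (a : ℝ) : Set (Esp d) :=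
  uSphere d ∩ {x | |⟪x, e⟫| ≤ Real.sin a}

/-- Unit vectors whose orthogonal hyperplane misses `B(e, a)` but separates `x₀` from it. -/
def lensSet {d : ℕ} (e x₀ : Esp d) (a : ℝ) : Set (Esp d) :=
  uSphere d ∩ {x | Real.sin a < ⟪x, e⟫ ∧ ⟪x, x₀⟫ ≤ 0}

lemma measurableSet_beltSet {d : ℕ} (e : Esp d) (a : ℝ) : MeasurableSet (beltSet e a) :=
  (measurableSet_uSphere d).inter (isClosed_le (by fun_prop) continuous_const).measurableSet

lemma measurableSet_lensSet {d : ℕ} (e x₀ : Esp d) (a : ℝ) : MeasurableSet (lensSet e x₀ a) := by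
  have h1 : MeasurableSet {x : Esp d | Real.sin a < ⟪x, e⟫} :=
    (isOpen_lt continuous_const (by fun_prop)).measurableSet
  have h2 : MeasurableSet {x : Esp d | ⟪x, x₀⟫ ≤ 0} :=
    (isClosed_le (by fun_prop) continuous_const).measurableSet
  exact (measurableSet_uSphere d).inter (h1.inter h2)

lemma coneMeas_beltSet_le (he : ‖e‖ = 1) (hx₀ : ‖x₀‖ = 1) (hβ : 0 < Real.sin β)
    (hcos : ⟪x₀, e⟫ = Real.cos β) (ha : 0 ≤ Real.sin a) :
    coneMeas (n + 1) (beltSet e a) ≤ ENNReal.ofReal (4 * Real.sin a) * unitBallVol n := by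
  obtain ⟨h1, h2⟩ := orthogonal_partner he hx₀ hβ (by rw [hcos]; exact Real.sin_sq_add_cos_sq β)
  set q := (Real.sin β)⁻¹ • (x₀ - ⟪x₀, e⟫ • e)
  have hbox := volume_box he h1 h2 (-Real.sin a) (Real.sin a) (-1) 1 one_pos
  rw [one_pow, one_pow, ENNReal.ofReal_one, one_mul, ← mul_assoc,
    ← ENNReal.ofReal_mul (by linarith)] at hbox
  rw [show 4 * Real.sin a = (Real.sin a - -Real.sin a) * (1 - -1) by ring, ← hbox,
    coneMeas_apply (measurableSet_beltSet e a)]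
  refine measure_mono ?_
  rintro x ⟨hx1, hxS, hx⟩
  have hn : 0 < ‖x‖ := by
    rw [norm_pos_iff]; rintro rfl; simp [uSphere] at hxS
  have hx2 : |⟪x, e⟫| ≤ Real.sin a * ‖x‖ := by
    have : |⟪‖x‖⁻¹ • x, e⟫| ≤ Real.sin a := hx
    rwa [real_inner_smul_left, abs_mul, abs_inv, abs_norm, inv_mul_eq_div, div_le_iff₀ hn] at this
  have hx3 : |⟪e, x⟫| ≤ Real.sin a := by
    rw [real_inner_comm]
    exact hx2.trans (by nlinarith)
  have hx4 : |⟪q, x⟫| ≤ 1 := by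
    have := abs_real_inner_le_norm q x
    rw [h1, one_mul] at this
    linarith
  refine ⟨abs_le.1 hx3, abs_le.1 hx4, ?_⟩
  nlinarith [sq_nonneg ⟪e, x⟫, sq_nonneg ⟪q, x⟫]

lemma le_coneMeas_lensSet (he : ‖e‖ = 1) (hx₀ : ‖x₀‖ = 1) (hcos : ⟪x₀, e⟫ = Real.cos β)
    (ha : 0 < a) (hε : 0 < ε) (hε1 : ε ≤ 1) (hβ : a + ε ≤ β) (hβ2 : β ≤ π / 2) :
    ENNReal.ofReal (ε / 20 * (Real.sqrt ((π / 2 - a) * ε) / (2 * π)) ^ n) * unitBallVol n ≤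
      coneMeas (n + 1) (lensSet e x₀ a) := by
  have hπ := Real.pi_pos
  have hsβ : 0 < Real.sin β := Real.sin_pos_of_pos_of_lt_pi (by linarith) (by linarith)
  have hcos' : ⟪e, x₀⟫ = Real.cos β := by rw [real_inner_comm, hcos]
  obtain ⟨h1, h2⟩ := orthogonal_partner hx₀ he hsβ
    (by rw [hcos']; exact Real.sin_sq_add_cos_sq β)
  set p := (Real.sin β)⁻¹ • (e - ⟪e, x₀⟫ • x₀) with hp
  have hep : e = Real.sin β • p + Real.cos β • x₀ := by
    rw [hp, smul_smul, mul_inv_cancel₀ hsβ.ne', one_smul, hcos']; abel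
  clear_value p
  have hh : 0 < Real.sqrt ((π / 2 - a) * ε) / (2 * π) := by
    have : 0 < π / 2 - a := by linarith
    positivity
  have hbox := volume_box h1 (q := -x₀) (by simpa using hx₀)
    (by rw [inner_neg_right, real_inner_comm, h2, neg_zero]) (1 / 2) (9 / 10) 0 (ε / 8) hh
  rw [← mul_assoc, ← mul_assoc, ← ENNReal.ofReal_mul (by norm_num),
    ← ENNReal.ofReal_mul (mul_nonneg (by norm_num) (by linarith)),
    show ((9 : ℝ) / 10 - 1 / 2) * (ε / 8 - 0) = ε / 20 by ring] at hbox
  rw [← hbox, coneMeas_apply (measurableSet_lensSet e x₀ a)]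
  refine measure_mono ?_
  rintro x ⟨hρ, hη, hx⟩
  obtain ⟨hN, hlt⟩ := sin_mul_lt_of_mem_box ha hε hε1 hβ hβ2 hρ.1 hρ.2 hη.1 hη.2 (norm_nonneg x) hx
  have hie : ⟪x, e⟫ = ⟪p, x⟫ * Real.sin β - ⟪-x₀, x⟫ * Real.cos β := by
    conv_lhs => rw [hep]
    rw [inner_add_right, real_inner_smul_right, real_inner_smul_right, inner_neg_left,
      real_inner_comm p, real_inner_comm x₀]
    ring
  rw [← hie] at hlt
  have hn : 0 < ‖x‖ := by
    rw [norm_pos_iff]; rintro rfl; simp at hlt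
  refine ⟨hN, by simp [uSphere, norm_smul, hn.ne'], ?_, ?_⟩
  · rwa [real_inner_smul_left, inv_mul_eq_div, lt_div_iff₀ hn]
  · rw [real_inner_smul_left]
    refine mul_nonpos_of_nonneg_of_nonpos (by positivity) ?_
    have := hη.1
    rw [inner_neg_left, real_inner_comm] at this
    linarith

end Regions

lemma stability_constant_le {m : ℕ} {a ε : ℝ} (ha : 0 < a) (ha2 : a < π / 2) (hε : 0 < ε) :
    (1 / 8 * (3 / π ^ 4) ^ (m + 1) * a ^ m * (π / 2 - a) ^ (m + 1) *
      ε ^ ((((m + 2 : ℕ) : ℝ) + 1) / 2)) * (4 * Real.sin a) ≤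
    2 * (ε / 20 * (Real.sqrt ((π / 2 - a) * ε) / (2 * π)) ^ (m + 1)) := by
  have hπ := Real.pi_gt_d2
  have hπ4 := Real.pi_lt_d2
  have hq : 0 < π / 2 - a := by linarith
  have hsin : Real.sin a ≤ a := Real.sin_le ha.le
  have hpow : ε ^ ((((m + 2 : ℕ) : ℝ) + 1) / 2) = ε * Real.sqrt ε ^ (m + 1) := by
    rw [Real.sqrt_eq_rpow, ← Real.rpow_natCast, ← Real.rpow_mul hε.le]
    nth_rw 2 [← Real.rpow_one ε]
    rw [← Real.rpow_add hε]
    congr 1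
    push_cast
    ring
  rw [hpow, Real.sqrt_mul hq.le]
  set q := π / 2 - a with hqdef
  set u := Real.sqrt q with hu
  have hupos : 0 < u := Real.sqrt_pos.2 hq
  have hu2 : u ^ 2 = q := Real.sq_sqrt hq.le
  have hau : a * u ≤ 1 := by
    refine le_of_sq_le_sq ?_ zero_le_one
    rw [mul_pow, hu2, hqdef]
    nlinarith [sq_nonneg (a - 1), mul_nonneg ha.le (sq_nonneg (a - 1))]
  have hbase : 5 * (3 / π ^ 4 * a * q) ≤ u / (2 * π) := by
    have h3 : (30 : ℝ) ≤ π ^ 3 := by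
      have : (3.14 : ℝ) ^ 3 ≤ π ^ 3 := by gcongr
      linarith
    rw [← hu2, le_div_iff₀ (by positivity)]
    have e : 5 * (3 / π ^ 4 * a * u ^ 2) * (2 * π) = 30 * (a * u) / π ^ 3 * u := by
      field_simp; ring
    rw [e]
    have : 30 * (a * u) / π ^ 3 ≤ 1 := by
      rw [div_le_one (by positivity)]; linarith
    nlinarith
  have hY : 0 ≤ 3 / π ^ 4 * a * q := by positivity
  have hkey : 5 * (3 / π ^ 4 * a * q) ^ (m + 1) ≤ (u / (2 * π)) ^ (m + 1) := by
    calc 5 * (3 / π ^ 4 * a * q) ^ (m + 1)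
        ≤ 5 ^ (m + 1) * (3 / π ^ 4 * a * q) ^ (m + 1) := by
          gcongr
          exact le_self_pow₀ (by norm_num) (by omega)
      _ = (5 * (3 / π ^ 4 * a * q)) ^ (m + 1) := by rw [mul_pow 5]
      _ ≤ _ := by gcongr
  calc _ ≤ (1 / 8 * (3 / π ^ 4) ^ (m + 1) * a ^ m * q ^ (m + 1) *
        (ε * Real.sqrt ε ^ (m + 1))) * (4 * a) := by gcongr
    _ = ε * Real.sqrt ε ^ (m + 1) / 10 * (5 * (3 / π ^ 4 * a * q) ^ (m + 1)) := by
      rw [mul_pow, mul_pow, pow_succ a]; ring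
    _ ≤ ε * Real.sqrt ε ^ (m + 1) / 10 * (u / (2 * π)) ^ (m + 1) := by gcongr
    _ = _ := by ring

section Hitting

variable {d : ℕ} {C K : Set (Esp d)} {e x₀ : Esp d} {a : ℝ}

lemma hitting_cap_subset (he : ‖e‖ = 1) (ha : 0 ≤ a) (ha2 : a ≤ π / 2) :
    {x | ∃ y ∈ cap e a, ⟪x, y⟫ = 0} ⊆ beltSet e a ∪ (uSphere d)ᶜ := by
  rintro x ⟨y, ⟨hyS, hy⟩, hxy⟩
  by_cases hxS : x ∈ uSphere d
  swap
  · exact Or.inr hxS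
  refine Or.inl ⟨hxS, ?_⟩
  have hπ := Real.pi_pos
  have hx1 : ‖x‖ = 1 := by simpa [uSphere] using hxS
  have hy1 : ‖y‖ = 1 := by simpa [uSphere] using hyS
  have h2 := abs_le.1 (abs_real_inner_le_norm y e)
  rw [hy1, he, one_mul] at h2
  have hin : Real.cos a ≤ ⟪y, e⟫ := by
    have h1 : Real.cos a ≤ Real.cos (geo y e) :=
      Real.cos_le_cos_of_nonneg_of_le_pi (Real.arccos_nonneg _) (by linarith) hy
    rwa [geo, Real.cos_arccos h2.1 h2.2] at h1
  have hcos : 0 ≤ Real.cos a := Real.cos_nonneg_of_mem_Icc ⟨by linarith, ha2⟩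
  have hsin : 0 ≤ Real.sin a := Real.sin_nonneg_of_nonneg_of_le_pi ha (by linarith)
  have hbessel : ⟪x, e⟫ ^ 2 + ⟪y, e⟫ ^ 2 ≤ 1 := by
    have h := sq_nonneg ‖e - ⟪x, e⟫ • x - ⟪y, e⟫ • y‖
    rw [norm_sub_sq_real, norm_sub_sq_real, norm_smul, norm_smul, inner_sub_left,
      real_inner_smul_right, real_inner_smul_right, real_inner_smul_right,
      real_inner_smul_left, hxy, hx1, hy1, he, Real.norm_eq_abs, Real.norm_eq_abs, mul_one,
      mul_one, sq_abs, sq_abs, real_inner_comm x e, real_inner_comm y e] at h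
    linarith
  refine abs_le_of_sq_le_sq ?_ hsin
  have : Real.cos a ^ 2 ≤ ⟪y, e⟫ ^ 2 := by gcongr
  linarith [Real.sin_sq_add_cos_sq a]

lemma beltSet_subset_hitting (he : ‖e‖ = 1) (ha : 0 ≤ a) (ha2 : a < π / 2)
    (hcap : cap e a ⊆ K) : beltSet e a ⊆ {x | ∃ y ∈ K, ⟪x, y⟫ = 0} := by
  rintro x ⟨hxS, hx⟩
  have hπ := Real.pi_pos
  have hx1 : ‖x‖ = 1 := by simpa [uSphere] using hxS
  have hcos : 0 < Real.cos a := Real.cos_pos_of_mem_Ioo ⟨by linarith, ha2⟩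
  have hx2 : ⟪x, e⟫ ^ 2 ≤ Real.sin a ^ 2 := sq_le_sq' (abs_le.1 hx).1 (abs_le.1 hx).2
  have hsq := Real.sin_sq_add_cos_sq a
  set s := Real.sqrt (1 - ⟪x, e⟫ ^ 2) with hs
  have hs2 : s ^ 2 = 1 - ⟪x, e⟫ ^ 2 := Real.sq_sqrt (by nlinarith)
  have hspos : 0 < s := Real.sqrt_pos.2 (by nlinarith)
  have hcs : Real.cos a ≤ s := Real.le_sqrt_of_sq_le (by linarith)
  obtain ⟨h1, h2⟩ := orthogonal_partner hx1 he hspos (by rw [hs2, real_inner_comm]; ring)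
  refine ⟨_, hcap ⟨?_, ?_⟩, h2⟩
  · simpa [uSphere] using h1
  · rw [geo, ← Real.arccos_cos ha (by linarith)]
    refine Real.arccos_le_arccos ?_
    rw [real_inner_smul_left, inner_sub_left, real_inner_smul_left, real_inner_self_eq_norm_sq,
      he, real_inner_comm x e]
    rw [inv_mul_eq_div, le_div_iff₀ hspos]
    nlinarith [mul_le_mul_of_nonneg_right hcs hspos.le]

lemma exists_orthogonal_of_inner_signs (hconv : Convex ℝ C)
    (hcone : ∀ x ∈ C, ∀ t : ℝ, 0 ≤ t → t • x ∈ C) (hK : K = C ∩ uSphere d)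
    (heK : e ∈ K) (hxK : x₀ ∈ K) {x : Esp d} (h1 : 0 < ⟪x, e⟫) (h2 : ⟪x, x₀⟫ ≤ 0)
    (hpos : 0 ≤ ⟪x₀, e⟫) : ∃ y ∈ K, ⟪x, y⟫ = 0 := by
  rw [hK] at heK hxK
  have he1 : ‖e‖ = 1 := by simpa [uSphere] using heK.2
  set z := (-⟪x, x₀⟫) • e + ⟪x, e⟫ • x₀ with hz
  have hzC : z ∈ C := cone_add_mem hconv hcone (hcone _ heK.1 _ (by linarith))
    (hcone _ hxK.1 _ h1.le)
  have hxz : ⟪x, z⟫ = 0 := by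
    rw [hz, inner_add_right, real_inner_smul_right, real_inner_smul_right]; ring
  have hz0 : z ≠ 0 := by
    intro h0
    have h3 : ⟪z, x₀⟫ = 0 := by rw [h0, inner_zero_left]
    have hx1 : ‖x₀‖ = 1 := by simpa [uSphere] using hxK.2
    rw [hz, inner_add_left, real_inner_smul_left, real_inner_smul_left,
      real_inner_self_eq_norm_sq, hx1, real_inner_comm x₀ e] at h3
    nlinarith [real_inner_comm x₀ e]
  have hn : 0 < ‖z‖ := norm_pos_iff.2 hz0
  refine ⟨‖z‖⁻¹ • z, ?_, by rw [real_inner_smul_right, hxz, mul_zero]⟩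
  rw [hK]
  exact ⟨hcone _ hzC _ (by positivity), by simp [uSphere, norm_smul, hn.ne']⟩

lemma add_coneMeas_le_hitting (hconv : Convex ℝ C)
    (hcone : ∀ x ∈ C, ∀ t : ℝ, 0 ≤ t → t • x ∈ C) (hK : K = C ∩ uSphere d)
    (heK : e ∈ K) (hxK : x₀ ∈ K) (hpos : 0 ≤ ⟪x₀, e⟫) (ha : 0 ≤ a) (ha2 : a < π / 2)
    (hcap : cap e a ⊆ K) :
    coneMeas d (beltSet e a) + 2 * coneMeas d (lensSet e x₀ a) ≤
      coneMeas d {x | ∃ y ∈ K, ⟪x, y⟫ = 0} := by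
  have he1 : ‖e‖ = 1 := by rw [hK] at heK; simpa [uSphere] using heK.2
  have hsin : 0 ≤ Real.sin a :=
    Real.sin_nonneg_of_nonneg_of_le_pi ha (by linarith [Real.pi_pos])
  let T : Esp d ≃ₗᵢ[ℝ] Esp d := LinearIsometryEquiv.neg ℝ
  have hA := measurableSet_lensSet e x₀ a
  have hA' : MeasurableSet (T ⁻¹' lensSet e x₀ a) := T.continuous.measurable hA
  have hT : coneMeas d (T ⁻¹' lensSet e x₀ a) = coneMeas d (lensSet e x₀ a) :=
    (coneMeas_invariant d T).measure_preimage hA.nullMeasurableSet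
  have hmem : ∀ x, x ∈ T ⁻¹' lensSet e x₀ a → Real.sin a < -⟪x, e⟫ ∧ 0 ≤ ⟪x, x₀⟫ := by
    rintro x ⟨-, h1, h2⟩
    simp only [T, LinearIsometryEquiv.coe_neg, inner_neg_left] at h1 h2
    exact ⟨h1, by linarith⟩
  have hd1 : Disjoint (lensSet e x₀ a) (T ⁻¹' lensSet e x₀ a) := by
    rw [Set.disjoint_left]
    intro x hx hx'
    linarith [hx.2.1, (hmem x hx').1]
  have hd2 : Disjoint (beltSet e a) (lensSet e x₀ a ∪ T ⁻¹' lensSet e x₀ a) := by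
    rw [Set.disjoint_left]
    rintro x ⟨-, hx⟩ (hx' | hx')
    · linarith [(abs_le.1 (show |⟪x, e⟫| ≤ Real.sin a from hx)).2, hx'.2.1]
    · linarith [(abs_le.1 (show |⟪x, e⟫| ≤ Real.sin a from hx)).1, (hmem x hx').1]
  rw [two_mul]
  nth_rw 2 [← hT]
  rw [← measure_union hd1 hA', ← measure_union hd2 (hA.union hA')]
  refine measure_mono (Set.union_subset (beltSet_subset_hitting he1 ha ha2 hcap)
    (Set.union_subset ?_ ?_))
  · intro x hx
    exact exists_orthogonal_of_inner_signs hconv hcone hK heK hxK (hsin.trans_lt hx.2.1) hx.2.2 hpos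
  · intro x hx
    obtain ⟨h1, h2⟩ := hmem x hx
    obtain ⟨y, hy, hxy⟩ := exists_orthogonal_of_inner_signs (x := -x) hconv hcone hK heK hxK
      (by rw [inner_neg_left]; linarith) (by rw [inner_neg_left]; linarith) hpos
    exact ⟨y, hy, by rwa [inner_neg_left, neg_eq_zero] at hxy⟩

end Hitting

/-- Theorem 4.4. Stability for the inradius: there is a constant
`c∘(a,d)` bounded below explicitly such that for every `K ∈ 𝒦̄_s^d` with
`Σ_r(K) ≥ a` and `ϑ_r(K) ≥ ε`, and every incentre `e`,
`U₁(K) ≥ (1 + c∘(a,d) ε^{(d+1)/2}) U₁(B(e,a))`. -/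
theorem statement2 (d : ℕ) (hd : 2 ≤ d) (a : ℝ) (ha : 0 < a) :
    ∃ c : ℝ, (1 / 8) * (3 / π ^ 4) ^ (d - 1) * a ^ (d - 2) * (π / 2 - a) ^ (d - 1) ≤ c ∧
      ∀ (K : Set (Esp d)) (ε : ℝ) (e : Esp d), IsSphConvBody d K →
        0 < ε → ε ≤ 1 → a ≤ SigmaR d K → ε ≤ thetaR d K →
        e ∈ K → rcent d K e = SigmaR d K →
        U1 d K ≥ (1 + c * ε ^ (((d : ℝ) + 1) / 2)) * U1 d (cap e a) := by
  obtain ⟨m, rfl⟩ : ∃ m, d = m + 2 := ⟨d - 2, by omega⟩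
  refine ⟨_, le_rfl, ?_⟩
  intro K ε e hKb hε hε1 haS hθ heK hmax
  obtain ⟨C, hclosed, hconv, hcone, -, hsub, hK⟩ := hKb
  have har : a ≤ rcent (m + 2) K e := hmax ▸ haS
  obtain ⟨x₀, hxK, hβ, hβ2⟩ :=
    exists_le_geo_of_le_thetaR hclosed hconv hcone hsub hK heK ha har hmax hθ
  have ha2 : a < π / 2 := by linarith
  have hcap := cap_subset_of_le_rcent hclosed hcone hK heK ha ha2 har
  have he1 : ‖e‖ = 1 := by rw [hK] at heK; simpa [uSphere] using heK.2
  have hx1 : ‖x₀‖ = 1 := by rw [hK] at hxK; simpa [uSphere] using hxK.2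
  have hpos : 0 ≤ ⟪x₀, e⟫ := Real.arccos_le_pi_div_two.1 hβ2
  have hcos : ⟪x₀, e⟫ = Real.cos (geo x₀ e) := by
    have h2 := abs_le.1 (abs_real_inner_le_norm x₀ e)
    rw [hx1, he1, one_mul] at h2
    rw [geo, Real.cos_arccos h2.1 h2.2]
  have hsβ : 0 < Real.sin (geo x₀ e) :=
    Real.sin_pos_of_pos_of_lt_pi (by linarith) (by linarith [Real.pi_pos])
  have hsa : 0 ≤ Real.sin a := Real.sin_nonneg_of_nonneg_of_le_pi ha.le (by linarith)
  by_cases hω : omegaTot (m + 2) = 0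
  · simp [U1, hω]
  obtain ⟨c, hc⟩ := sigmaMeas_eq_smul_coneMeas hω
  have hbelt := coneMeas_beltSet_le he1 hx1 hsβ hcos hsa
  have hlens := le_coneMeas_lensSet he1 hx1 hcos ha hε hε1 hβ hβ2
  have hadd := add_coneMeas_le_hitting hconv hcone hK heK hxK hpos ha.le ha2 hcap
  have hconst := stability_constant_le (m := m) ha ha2 hε
  simp only [show m + 2 - 1 = m + 1 by omega, show m + 2 - 2 = m by omega]
  set k := 1 / 8 * (3 / π ^ 4) ^ (m + 1) * a ^ m * (π / 2 - a) ^ (m + 1) *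
      ε ^ ((((m + 2 : ℕ) : ℝ) + 1) / 2) with hk
  have hq : 0 < π / 2 - a := by linarith
  have hk0 : 0 ≤ k := by positivity
  have hkZ : ENNReal.ofReal k * coneMeas (m + 2) (beltSet e a) ≤
      2 * coneMeas (m + 2) (lensSet e x₀ a) := by
    calc _ ≤ ENNReal.ofReal k * (ENNReal.ofReal (4 * Real.sin a) * unitBallVol (m + 1)) := by
          gcongr
      _ = ENNReal.ofReal (k * (4 * Real.sin a)) * unitBallVol (m + 1) := by
          rw [ENNReal.ofReal_mul hk0, mul_assoc]
      _ ≤ ENNReal.ofReal (2 * (ε / 20 * (Real.sqrt ((π / 2 - a) * ε) / (2 * π)) ^ (m + 1))) *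
            unitBallVol (m + 1) := by gcongr
      _ ≤ _ := by
          rw [ENNReal.ofReal_mul (by norm_num), mul_assoc, ENNReal.ofReal_ofNat]
          gcongr
  have hmain : ENNReal.ofReal (1 + k) * sigmaMeas (m + 2) {x | ∃ y ∈ cap e a, ⟪x, y⟫ = 0} ≤
      sigmaMeas (m + 2) {x | ∃ y ∈ K, ⟪x, y⟫ = 0} := by
    have hZ : coneMeas (m + 2) {x | ∃ y ∈ cap e a, ⟪x, y⟫ = 0} ≤
        coneMeas (m + 2) (beltSet e a) := by
      refine (measure_mono (hitting_cap_subset he1 ha.le ha2.le)).trans ?_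
      refine (measure_union_le _ _).trans ?_
      rw [coneMeas_compl, add_zero]
    rw [hc, Measure.smul_apply, Measure.smul_apply, smul_eq_mul, smul_eq_mul, mul_left_comm]
    gcongr
    calc _ ≤ ENNReal.ofReal (1 + k) * coneMeas (m + 2) (beltSet e a) := by gcongr
      _ = coneMeas (m + 2) (beltSet e a) +
            ENNReal.ofReal k * coneMeas (m + 2) (beltSet e a) := by
          rw [ENNReal.ofReal_add zero_le_one hk0, ENNReal.ofReal_one, add_mul, one_mul]
      _ ≤ _ := le_trans (by gcongr) hadd
  have hfin : sigmaMeas (m + 2) {x | ∃ y ∈ K, ⟪x, y⟫ = 0} ≠ ∞ := by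
    have ht : sigmaMeas (m + 2) (uSphere (m + 2)) ≠ ∞ := fun h' => hω (by simp [omegaTot, h'])
    refine ne_top_of_le_ne_top ht ?_
    have : sigmaMeas (m + 2) {x | ∃ y ∈ K, ⟪x, y⟫ = 0} ≤
        sigmaMeas (m + 2) (uSphere (m + 2) ∪ (uSphere (m + 2))ᶜ) := measure_mono (by simp)
    refine this.trans ((measure_union_le _ _).trans ?_)
    rw [sigmaMeas_compl, add_zero]
  have hreal := ENNReal.toReal_mono hfin hmain
  rw [ENNReal.toReal_mul, ENNReal.toReal_ofReal (by linarith)] at hreal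
  have hω0 : 0 ≤ omegaTot (m + 2) := ENNReal.toReal_nonneg
  unfold U1
  rw [ge_iff_le, mul_left_comm]
  gcongr

end
end

section
/- The functions h_m, m ∈ ℕ₀, have the following properties: (1) h_m' = h_{m−1} for m ≥ 1; (2) h₀(t) = 2 − e^{−t} ≥ 1 and h₁(t) = e^{−t} + 2t ≥ 1 for t ≥ 0; (3) h_m(0) = 1 for all m ≥ 0; (4) h_m is strictly increasing on [0,∞) and h_m ≥ 1 for all m ≥ 0; (5) h_m is convex for m ≥ 1; (6) 0 ≤ h_m(t) − (1 + t/1! + t²/2! + … + t^m/m!) ≤ t^m/m! for all t ≥ 0 and m ∈ ℕ₀. -/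
open Real MeasureTheory Filter
open scoped RealInnerProductSpace ENNReal NNReal Topology

noncomputable section

theorem hFun_zero (t : ℝ) : hFun 0 t = 2 - Real.exp (-t) := by
  simp [hFun]; ring

theorem hFun_one (t : ℝ) : hFun 1 t = Real.exp (-t) + 2 * t := by
  simp [hFun]

theorem hFun_add_two (m : ℕ) (t : ℝ) :
    hFun (m + 2) t = hFun m t + 2 * (t ^ (m + 2) / (Nat.factorial (m + 2) : ℝ)) := by
  have hdiv : (m + 2) / 2 + 1 = m / 2 + 1 + 1 := by omega
  have hsub (i : ℕ) : m + 2 - 2 * (i + 1) = m - 2 * i := by omega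
  simp only [hFun, hdiv, Finset.sum_range_succ' _ (m / 2 + 1), hsub, mul_zero, Nat.sub_zero]
  ring

theorem hFun_apply_zero (m : ℕ) : hFun m 0 = 1 := by
  induction m using Nat.twoStepInduction with
  | zero => norm_num [hFun_zero]
  | one => norm_num [hFun_one]
  | more m ih _ => simp [hFun_add_two, ih]

theorem hasDerivAt_pow_div_factorial (n : ℕ) (t : ℝ) :
    HasDerivAt (fun s : ℝ => s ^ (n + 1) / (Nat.factorial (n + 1) : ℝ))
      (t ^ n / (Nat.factorial n : ℝ)) t := by
  refine ((hasDerivAt_pow (n + 1) t).div_const _).congr_deriv ?_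
  rw [Nat.factorial_succ]
  push_cast
  have := Nat.factorial_ne_zero n
  field_simp

theorem hasDerivAt_hFun (m : ℕ) (t : ℝ) : HasDerivAt (hFun (m + 1)) (hFun m t) t := by
  have hexp : HasDerivAt (fun s : ℝ => Real.exp (-s)) (-Real.exp (-t)) t := by
    simpa using (hasDerivAt_neg t).exp
  induction m using Nat.twoStepInduction with
  | zero =>
    rw [funext hFun_one, hFun_zero]
    exact (hexp.add ((hasDerivAt_id t).const_mul 2)).congr_deriv (by ring)
  | one =>
    rw [funext (hFun_add_two 0), funext hFun_zero, hFun_one]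
    exact ((hexp.const_sub 2).add
      ((hasDerivAt_pow_div_factorial 1 t).const_mul 2)).congr_deriv (by simp)
  | more m ih _ =>
    rw [funext (hFun_add_two (m + 1)), hFun_add_two]
    exact ih.add ((hasDerivAt_pow_div_factorial (m + 2) t).const_mul 2)

/-- The difference between `h_m` and the `m`-th Taylor polynomial of the exponential function. -/
def hFunRemainder (m : ℕ) (t : ℝ) : ℝ :=
  hFun m t - ∑ i ∈ Finset.range (m + 1), t ^ i / (Nat.factorial i : ℝ)

theorem hFunRemainder_zero (t : ℝ) : hFunRemainder 0 t = 1 - Real.exp (-t) := by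
  simp [hFunRemainder, hFun_zero]; ring

theorem hFunRemainder_succ_add (m : ℕ) (t : ℝ) :
    hFunRemainder (m + 1) t + hFunRemainder m t = t ^ (m + 1) / (Nat.factorial (m + 1) : ℝ) := by
  induction m with
  | zero => simp [hFunRemainder, hFun_zero, hFun_one, Finset.sum_range_succ]; ring
  | succ m ih =>
    simp only [hFunRemainder, hFun_add_two, Finset.sum_range_succ _ (m + 1 + 1),
      Finset.sum_range_succ _ (m + 1)] at ih ⊢
    linear_combination ih

theorem hasDerivAt_hFunRemainder (m : ℕ) (t : ℝ) :
    HasDerivAt (hFunRemainder (m + 1)) (hFunRemainder m t) t := by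
  refine (hasDerivAt_hFun m t).sub ?_
  simp_rw [Finset.sum_range_succ' _ (m + 1)]
  simpa using HasDerivAt.fun_sum fun i (_ : i ∈ Finset.range (m + 1)) =>
    hasDerivAt_pow_div_factorial i t

theorem hFunRemainder_apply_zero (m : ℕ) : hFunRemainder m 0 = 0 := by
  simp [hFunRemainder, hFun_apply_zero, Finset.sum_range_succ']

theorem hFunRemainder_nonneg (m : ℕ) {t : ℝ} (ht : 0 ≤ t) : 0 ≤ hFunRemainder m t := by
  induction m generalizing t with
  | zero => simpa [hFunRemainder_zero] using ht
  | succ m ih =>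
    have hmono : MonotoneOn (hFunRemainder (m + 1)) (Set.Ici 0) := by
      refine monotoneOn_of_deriv_nonneg (convex_Ici 0)
        (fun s _ => (hasDerivAt_hFunRemainder m s).continuousAt.continuousWithinAt)
        (fun s _ => (hasDerivAt_hFunRemainder m s).differentiableAt.differentiableWithinAt)
        fun s hs => ?_
      rw [(hasDerivAt_hFunRemainder m s).deriv]
      exact ih (interior_subset hs)
    simpa [hFunRemainder_apply_zero] using hmono Set.self_mem_Ici ht ht

theorem hFunRemainder_le (m : ℕ) {t : ℝ} (ht : 0 ≤ t) :
    hFunRemainder m t ≤ t ^ m / (Nat.factorial m : ℝ) := by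
  cases m with
  | zero => simp [hFunRemainder_zero, Real.exp_nonneg]
  | succ m => linarith [hFunRemainder_succ_add m t, hFunRemainder_nonneg m ht]

theorem one_le_hFun (m : ℕ) {t : ℝ} (ht : 0 ≤ t) : 1 ≤ hFun m t := by
  have hsum : (1 : ℝ) ≤ ∑ i ∈ Finset.range (m + 1), t ^ i / (Nat.factorial i : ℝ) := by
    rw [Finset.sum_range_succ']
    have : 0 ≤ ∑ i ∈ Finset.range m, t ^ (i + 1) / (Nat.factorial (i + 1) : ℝ) :=
      Finset.sum_nonneg fun i _ => by positivity
    simpa using this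
  have hrem := hFunRemainder_nonneg m ht
  rw [hFunRemainder] at hrem
  linarith

theorem strictMonoOn_hFun (m : ℕ) : StrictMonoOn (hFun m) (Set.Ici 0) := by
  cases m with
  | zero =>
    intro s _ t _ hst
    simpa [hFun_zero] using hst
  | succ m =>
    refine strictMonoOn_of_deriv_pos (convex_Ici 0)
      (fun s _ => (hasDerivAt_hFun m s).continuousAt.continuousWithinAt) fun s hs => ?_
    rw [(hasDerivAt_hFun m s).deriv]
    exact zero_lt_one.trans_le (one_le_hFun m (interior_subset hs))

theorem convexOn_hFun_succ (m : ℕ) : ConvexOn ℝ (Set.Ici 0) (hFun (m + 1)) := by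
  refine MonotoneOn.convexOn_of_deriv (convex_Ici 0)
    (fun s _ => (hasDerivAt_hFun m s).continuousAt.continuousWithinAt)
    (fun s _ => (hasDerivAt_hFun m s).differentiableAt.differentiableWithinAt) ?_
  rw [funext fun s => (hasDerivAt_hFun m s).deriv]
  exact (strictMonoOn_hFun m).monotoneOn.mono interior_subset

/-- Lemma 8.1. Properties of the functions `h_m`. -/
theorem statement14 :
    (∀ m : ℕ, 1 ≤ m → ∀ t ∈ Set.Ici (0 : ℝ),
      HasDerivWithinAt (hFun m) (hFun (m - 1) t) (Set.Ici 0) t) ∧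
    (∀ t : ℝ, 0 ≤ t → hFun 0 t = 2 - Real.exp (-t) ∧ 1 ≤ hFun 0 t ∧
      hFun 1 t = Real.exp (-t) + 2 * t ∧ 1 ≤ hFun 1 t) ∧
    (∀ m : ℕ, hFun m 0 = 1) ∧
    (∀ m : ℕ, StrictMonoOn (hFun m) (Set.Ici 0) ∧ ∀ t : ℝ, 0 ≤ t → 1 ≤ hFun m t) ∧
    (∀ m : ℕ, 1 ≤ m → ConvexOn ℝ (Set.Ici 0) (hFun m)) ∧
    (∀ m : ℕ, ∀ t : ℝ, 0 ≤ t →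
      0 ≤ hFun m t - ∑ i ∈ Finset.range (m + 1), t ^ i / (Nat.factorial i : ℝ) ∧
      hFun m t - ∑ i ∈ Finset.range (m + 1), t ^ i / (Nat.factorial i : ℝ) ≤
        t ^ m / (Nat.factorial m : ℝ)) := by
  refine ⟨fun m hm t _ => ?_, fun t ht => ⟨hFun_zero t, one_le_hFun 0 ht, hFun_one t,
    one_le_hFun 1 ht⟩, hFun_apply_zero, fun m => ⟨strictMonoOn_hFun m, fun t => one_le_hFun m⟩,
    fun m hm => ?_, fun m t ht => ⟨hFunRemainder_nonneg m ht, hFunRemainder_le m ht⟩⟩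
  · obtain ⟨m, rfl⟩ := Nat.exists_eq_add_of_le' hm
    exact (hasDerivAt_hFun m t).hasDerivWithinAt
  · obtain ⟨m, rfl⟩ := Nat.exists_eq_add_of_le' hm
    exact convexOn_hFun_succ m

end
end
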